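/- arXiv:1211.2565 — 3 statements merged into one kernel-verified Lean document; each statement's English description precedes it below -/
import Mathlib

section
/- Let (X, ω) be a 2n-dimensional closed symplectic manifold satisfying the Hard Lefschetz Condition. Then the de Rham cohomology decomposes as a direct sum H^k_dR(X;ℝ) = ⊕_{r∈ℕ} H^{(r,k−2r)}_ω(X;ℝ) for every degree k. -/
open Submodule

noncomputable section

/-- An algebraic model of the de Rham complex of a closed (compact, without boundary)
smooth manifold `X` of dimension `2 * n` endowed with a symplectic structure `ω`
(a non-degenerate `d`-closed `2`-form): `M` is the space of (inhomogeneous) real smooth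
differential forms, `Ω k` the subspace of `k`-forms, `d` the exterior differential,
`wedge` the wedge product, `ω` the symplectic form (so that `wedge ω` is the Lefschetz
operator `L`), `Λ = -ι_{ω⁻¹}` the dual Lefschetz operator, and `integral` the integration
of top-degree forms over the closed manifold `X`. -/
structure ClosedSymplecticManifold (n : ℕ) where
  M : Type*
  [acg : AddCommGroup M]
  [mod : Module ℝ M]
  Ω : ℤ → Submodule ℝ M
  Ω_neg : ∀ k : ℤ, k < 0 → Ω k = ⊥
  Ω_top : ∀ k : ℤ, 2 * (n : ℤ) < k → Ω k = ⊥
  Ω_internal : DirectSum.IsInternal Ω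
  d : M →ₗ[ℝ] M
  d_mem : ∀ (k : ℤ), ∀ α ∈ Ω k, d α ∈ Ω (k + 1)
  d_d : ∀ α, d (d α) = 0
  wedge : M →ₗ[ℝ] M →ₗ[ℝ] M
  wedge_mem : ∀ (k l : ℤ), ∀ α ∈ Ω k, ∀ β ∈ Ω l, wedge α β ∈ Ω (k + l)
  wedge_assoc : ∀ α β γ, wedge (wedge α β) γ = wedge α (wedge β γ)
  one : M
  one_mem : one ∈ Ω 0
  one_wedge : ∀ α, wedge one α = α
  wedge_comm : ∀ (k l : ℤ), ∀ α ∈ Ω k, ∀ β ∈ Ω l,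
      wedge α β = ((-1 : ℝ) ^ (k * l)) • wedge β α
  leibniz : ∀ (k : ℤ), ∀ α ∈ Ω k, ∀ β,
      d (wedge α β) = wedge (d α) β + ((-1 : ℝ) ^ k) • wedge α (d β)
  ω : M
  ω_mem : ω ∈ Ω 2
  dω : d ω = 0
  /-- non-degeneracy of `ω`: `L^k : Ω^{n-k} → Ω^{n+k}` is injective … -/
  lefschetz_inj : ∀ k : ℕ, k ≤ n → ∀ α ∈ Ω ((n : ℤ) - k), (wedge ω ^ k) α = 0 → α = 0
  /-- … and surjective. -/
  lefschetz_surj : ∀ k : ℕ, k ≤ n → ∀ β ∈ Ω ((n : ℤ) + k),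
      ∃ α ∈ Ω ((n : ℤ) - k), (wedge ω ^ k) α = β
  Λ : M →ₗ[ℝ] M
  Λ_mem : ∀ (k : ℤ), ∀ α ∈ Ω k, Λ α ∈ Ω (k - 2)
  /-- the `𝔰𝔩(2;ℝ)`-commutation relation `[Λ, L] = (n - k)·id` on `k`-forms -/
  sl2 : ∀ (k : ℤ), ∀ α ∈ Ω k, Λ (wedge ω α) - wedge ω (Λ α) = ((n : ℤ) - k) • α
  /-- a `k`-form `β` is primitive iff `Λ β = 0` iff `L^{n-k+1} β = 0` -/
  primitive_iff : ∀ k : ℕ, k ≤ n → ∀ α ∈ Ω (k : ℤ),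
      (Λ α = 0 ↔ (wedge ω ^ (n - k + 1)) α = 0)
  integral : M →ₗ[ℝ] ℝ
  integral_ne_top : ∀ (k : ℤ), k ≠ 2 * (n : ℤ) → ∀ α ∈ Ω k, integral α = 0
  /-- Stokes' theorem on the closed manifold `X` -/
  stokes : ∀ α, integral (d α) = 0
  /-- positivity of the symplectic volume: for a function `f ≠ 0`, `∫_X f·f·ωⁿ > 0` -/
  volume_pos : ∀ f ∈ Ω 0, f ≠ 0 → 0 < integral (wedge f (wedge f ((wedge ω ^ n) one)))
  /-- Poincaré duality: non-degeneracy of the intersection pairing on cohomology -/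
  poincare_duality : ∀ (k : ℤ), ∀ α ∈ Ω k, d α = 0 →
      (∀ β ∈ Ω (2 * (n : ℤ) - k), d β = 0 → integral (wedge α β) = 0) →
      α ∈ (Ω (k - 1)).map d

attribute [instance] ClosedSymplecticManifold.acg ClosedSymplecticManifold.mod

namespace ClosedSymplecticManifold

variable {n : ℕ} (S : ClosedSymplecticManifold n)

/-- the Lefschetz operator `L = ω ∧ ·` -/
def L : S.M →ₗ[ℝ] S.M := S.wedge S.ω

/-- closed `k`-forms -/
def Zc (k : ℤ) : Submodule ℝ S.M := S.Ω k ⊓ LinearMap.ker S.d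

/-- exact `k`-forms -/
def Bc (k : ℤ) : Submodule ℝ S.M := (S.Ω (k - 1)).map S.d

/-- the de Rham cohomology group `H^k_{dR}(X; ℝ)` -/
abbrev Hc (k : ℤ) := ↥(S.Zc k) ⧸ (S.Bc k).comap (S.Zc k).subtype

/-- the de Rham cohomology class of a closed `k`-form -/
abbrev cls (k : ℤ) (a : S.Zc k) : S.Hc k := Submodule.Quotient.mk a

/-- the subgroup `H^{(r, k-2r)}_ω(X; ℝ) ⊆ H^k_{dR}(X;ℝ)` of classes admitting a representative
`L^r β` with `β` a primitive `(k - 2r)`-form -/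
def Hsub (k : ℤ) (r : ℕ) : Submodule ℝ (S.Hc k) :=
  ((((S.Ω (k - 2 * r) ⊓ LinearMap.ker S.Λ).map (S.L ^ r)).comap (S.Zc k).subtype)).map
    ((S.Bc k).comap (S.Zc k).subtype).mkQ

end ClosedSymplecticManifold

namespace ClosedSymplecticManifold

variable {n : ℕ} (S : ClosedSymplecticManifold n)

/-- The **Hard Lefschetz Condition**: for every `k ∈ ℕ`, the map
`L^k : H^{n-k}_dR(X;ℝ) → H^{n+k}_dR(X;ℝ)` induced by cup product with `[ω]^k` is an
isomorphism (stated on representatives: it is injective and surjective on cohomology). -/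
def HardLefschetz : Prop :=
  ∀ k : ℕ,
    (∀ α ∈ S.Zc ((n : ℤ) - k), (S.L ^ k) α ∈ S.Bc ((n : ℤ) + k) → α ∈ S.Bc ((n : ℤ) - k)) ∧
    (∀ β ∈ S.Zc ((n : ℤ) + k), ∃ α ∈ S.Zc ((n : ℤ) - k), (S.L ^ k) α - β ∈ S.Bc ((n : ℤ) + k))

end ClosedSymplecticManifold

namespace ClosedSymplecticManifold

variable {n : ℕ} (S : ClosedSymplecticManifold n)

lemma d_L (α : S.M) : S.d (S.L α) = S.L (S.d α) := by
  have h := S.leibniz 2 S.ω S.ω_mem α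
  rw [S.dω] at h
  simpa [L] using h

lemma d_Lpow (r : ℕ) (α : S.M) : S.d ((S.L ^ r) α) = (S.L ^ r) (S.d α) := by
  induction r with
  | zero => simp
  | succ r ih => simp only [pow_succ', Module.End.mul_apply, d_L, ih]

lemma Lpow_add (r t : ℕ) (α : S.M) : (S.L ^ r) ((S.L ^ t) α) = (S.L ^ (r + t)) α := by
  rw [pow_add, Module.End.mul_apply]

lemma Lpow_mem {k : ℤ} (r : ℕ) {m : ℤ} (hm : m = k + 2 * r) {α : S.M} (h : α ∈ S.Ω k) :
    (S.L ^ r) α ∈ S.Ω m := by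
  subst hm
  induction r with
  | zero => simpa using h
  | succ r ih =>
    rw [pow_succ', Module.End.mul_apply]
    have := S.wedge_mem 2 _ S.ω S.ω_mem _ ih
    have e : k + 2 * ((r + 1 : ℕ) : ℤ) = 2 + (k + 2 * r) := by push_cast; ring
    rw [e]; exact this

lemma mem_Zc {k : ℤ} {α : S.M} : α ∈ S.Zc k ↔ α ∈ S.Ω k ∧ S.d α = 0 := by
  simp [Zc]

lemma Bc_le_Zc (k : ℤ) : S.Bc k ≤ S.Zc k := by
  rintro _ ⟨γ, hγ, rfl⟩
  refine S.mem_Zc.2 ⟨?_, S.d_d _⟩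
  have := S.d_mem _ _ hγ
  rwa [sub_add_cancel] at this

lemma Lpow_Zc {k : ℤ} (r : ℕ) {m : ℤ} (hm : m = k + 2 * r) {α : S.M} (h : α ∈ S.Zc k) :
    (S.L ^ r) α ∈ S.Zc m := by
  rw [mem_Zc] at *
  exact ⟨S.Lpow_mem r hm h.1, by rw [d_Lpow, h.2, map_zero]⟩

lemma Lpow_Bc {k : ℤ} (r : ℕ) {m : ℤ} (hm : m = k + 2 * r) {α : S.M} (h : α ∈ S.Bc k) :
    (S.L ^ r) α ∈ S.Bc m := by
  obtain ⟨γ, hγ, rfl⟩ := h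
  exact ⟨(S.L ^ r) γ, S.Lpow_mem r (by rw [hm]; ring) hγ, S.d_Lpow r γ⟩

lemma eq_zero_of_neg {k : ℤ} (hk : k < 0) {α : S.M} (h : α ∈ S.Ω k) : α = 0 := by
  rw [S.Ω_neg k hk] at h; simpa using h

lemma eq_zero_of_top {k : ℤ} (hk : 2 * (n : ℤ) < k) {α : S.M} (h : α ∈ S.Ω k) : α = 0 := by
  rw [S.Ω_top k hk] at h; simpa using h

lemma Lpow_inj {j : ℤ} (r : ℕ) (hr : (r : ℤ) ≤ n - j) {α : S.M} (h : α ∈ S.Ω j)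
    (h0 : (S.L ^ r) α = 0) : α = 0 := by
  rcases lt_or_ge j 0 with hj | hj
  · exact S.eq_zero_of_neg hj h
  obtain ⟨m, hm⟩ : ∃ m : ℕ, (m : ℤ) = n - j := ⟨(n - j).toNat, by omega⟩
  refine S.lefschetz_inj m (by omega) α (by convert h using 2; omega) ?_
  have : m = (m - r) + r := by omega
  change (S.L ^ m) α = 0
  rw [this, ← Lpow_add, h0, map_zero]

lemma prim_high {s : ℤ} (hs : (n : ℤ) < s) {β : S.M} (h : β ∈ S.Ω s) (hΛ : S.Λ β = 0) :
    β = 0 := by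
  have key : ∀ j : ℕ, ∃ c : ℝ, c < 0 ∧ S.Λ ((S.L ^ (j + 1)) β) = c • (S.L ^ j) β := by
    intro j
    induction j with
    | zero =>
      refine ⟨(((n : ℤ) - s : ℤ) : ℝ), by exact_mod_cast (by omega : (n : ℤ) - s < 0), ?_⟩
      have := S.sl2 s β h
      rw [hΛ, map_zero, sub_zero] at this
      rw [Int.cast_smul_eq_zsmul]
      simpa [L] using this
    | succ j ih =>
      obtain ⟨c, hc, e⟩ := ih
      have hm := S.Lpow_mem (j + 1) rfl h
      have := S.sl2 _ _ hm
      rw [e, sub_eq_iff_eq_add, map_smul] at this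
      refine ⟨(((n : ℤ) - (s + 2 * ((j + 1 : ℕ) : ℤ)) : ℤ) : ℝ) + c, ?_, ?_⟩
      · have : (((n : ℤ) - (s + 2 * ((j + 1 : ℕ) : ℤ)) : ℤ) : ℝ) < 0 := by
          exact_mod_cast (by omega : (n : ℤ) - (s + 2 * ((j + 1 : ℕ) : ℤ)) < 0)
        linarith
      · rw [add_smul, Int.cast_smul_eq_zsmul, pow_succ' S.L (j + 1), Module.End.mul_apply]
        refine Eq.trans this ?_
        congr 2
        rw [pow_succ' S.L j, Module.End.mul_apply]; rfl
  have hdown : ∀ j : ℕ, (S.L ^ j) β = 0 → β = 0 := by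
    intro j
    induction j with
    | zero => intro h; simpa using h
    | succ j ih =>
      intro h0
      obtain ⟨c, hc, e⟩ := key j
      rw [h0, map_zero] at e
      exact ih ((smul_eq_zero.1 e.symm).resolve_left hc.ne)
  refine hdown n (S.eq_zero_of_top ?_ (S.Lpow_mem n rfl h))
  omega

lemma prim_pow {s : ℤ} {β : S.M} (h : β ∈ S.Ω s) (hΛ : S.Λ β = 0) (r : ℕ)
    (hr : (n : ℤ) - s < r) : (S.L ^ r) β = 0 := by
  rcases lt_or_ge s 0 with hj | hj
  · rw [S.eq_zero_of_neg hj h, map_zero]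
  rcases lt_or_ge (n : ℤ) s with hn | hn
  · rw [S.prim_high hn h hΛ, map_zero]
  lift s to ℕ using hj
  have h1 := (S.primitive_iff s (by omega) β h).1 hΛ
  have : r = (r - (n - s + 1)) + (n - s + 1) := by omega
  rw [this, ← Lpow_add]
  have h2 : (S.L ^ (n - s + 1)) β = 0 := h1
  rw [h2, map_zero]

/-- primitive representatives -/
def Pr (k : ℤ) (r : ℕ) : Submodule ℝ S.M := (S.Ω (k - 2 * r) ⊓ LinearMap.ker S.Λ).map (S.L ^ r)

/-- the span of exact forms and closed forms of pure type -/
def Ec (k : ℤ) : Submodule ℝ S.M := S.Bc k ⊔ ⨆ r, (S.Pr k r ⊓ S.Zc k)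

lemma Lpow_Ec {k : ℤ} (t : ℕ) {m : ℤ} (hm : m = k + 2 * t) {α : S.M} (h : α ∈ S.Ec k) :
    (S.L ^ t) α ∈ S.Ec m := by
  suffices S.Ec k ≤ (S.Ec m).comap (S.L ^ t) from this h
  refine sup_le ?_ (iSup_le fun r => ?_)
  · intro x hx
    exact Submodule.mem_sup_left (S.Lpow_Bc t hm hx)
  · rintro x ⟨⟨β, hβ, rfl⟩, hx⟩
    refine Submodule.mem_sup_right (Submodule.mem_iSup_of_mem (t + r) ⟨⟨β, ?_, ?_⟩, ?_⟩)
    · have : m - 2 * ((t + r : ℕ) : ℤ) = k - 2 * r := by push_cast; omega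
      rw [this]; exact hβ
    · rw [Lpow_add]
    · exact S.Lpow_Zc t hm hx

lemma span_low (hS : S.HardLefschetz) (N : ℕ) : ∀ k : ℤ, k ≤ n → k < N → ∀ α ∈ S.Zc k,
    α ∈ S.Ec k := by
  induction N with
  | zero =>
    intro k _ hk α hα
    rw [S.eq_zero_of_neg hk (S.mem_Zc.1 hα).1]
    exact zero_mem _
  | succ N ih =>
    intro k hkn hk α hα
    rcases lt_or_ge k 0 with hk0 | hk0
    · rw [S.eq_zero_of_neg hk0 (S.mem_Zc.1 hα).1]
      exact zero_mem _
    lift k to ℕ using hk0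
    have hkn' : k ≤ n := by omega
    obtain ⟨α', hα', γ, hγ, e⟩ := (hS (n - k + 2)).2 ((S.L ^ (n - k + 1)) α)
      (S.Lpow_Zc (n - k + 1) (k := k) (by push_cast [hkn']; ring) hα)
    have hα'Z : α' ∈ S.Zc ((k : ℤ) - 2) := by
      convert hα' using 2; push_cast [hkn']; ring
    have hLα' : S.L α' ∈ S.Zc k := by
      simpa using S.Lpow_Zc 1 (m := k) (by push_cast; ring) hα'Z
    have h1 : S.L α' ∈ S.Ec k := by
      simpa using S.Lpow_Ec 1 (m := k) (by push_cast; ring)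
        (ih ((k : ℤ) - 2) (by omega) (by push_cast at hk; omega) α' hα'Z)
    have hγ2 : ∃ δ ∈ S.Ω ((k : ℤ) - 1), (S.L ^ (n - k + 1)) δ = γ := by
      rcases Nat.eq_zero_or_pos k with h0 | h0
      · refine ⟨0, zero_mem _, ?_⟩
        rw [map_zero]
        exact (S.eq_zero_of_top (by omega) hγ).symm
      · obtain ⟨δ, hδ, e⟩ := S.lefschetz_surj (n - k + 1) (by omega) γ
          (by
            have e2 : (n : ℤ) + (n - k + 1 : ℕ) = n + (n - k + 2 : ℕ) - 1 := by omega
            rw [e2]; exact hγ)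
        refine ⟨δ, ?_, e⟩
        convert hδ using 2; push_cast [hkn']; ring
    obtain ⟨δ, hδ, rfl⟩ := hγ2
    have hdδ : S.d δ ∈ S.Bc k := ⟨δ, hδ, rfl⟩
    have hp : (α - S.L α' + S.d δ) ∈ S.Zc k :=
      add_mem (sub_mem hα hLα') (S.Bc_le_Zc _ hdδ)
    have hpΛ : S.Λ (α - S.L α' + S.d δ) = 0 := by
      refine (S.primitive_iff k hkn' _ (S.mem_Zc.1 hp).1).2 ?_
      change (S.L ^ (n - k + 1)) _ = 0
      rw [d_Lpow, pow_succ S.L (n - k + 1), Module.End.mul_apply] at e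
      rw [map_add, map_sub, e]
      abel
    have h2 : (α - S.L α' + S.d δ) ∈ S.Ec k := by
      refine Submodule.mem_sup_right (Submodule.mem_iSup_of_mem 0 ⟨⟨_, ⟨?_, hpΛ⟩, ?_⟩, hp⟩)
      · simpa using (S.mem_Zc.1 hp).1
      · simp
    have h3 : S.d δ ∈ S.Ec k := Submodule.mem_sup_left hdδ
    have : α = (α - S.L α' + S.d δ) - S.d δ + S.L α' := by abel
    rw [this]
    exact add_mem (sub_mem h2 h3) h1

lemma span_all (hS : S.HardLefschetz) (k : ℕ) (α : S.M) (hα : α ∈ S.Zc k) : α ∈ S.Ec k := by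
  rcases le_or_gt k n with h | h
  · exact S.span_low hS (k + 1) k (by omega) (by push_cast; omega) α hα
  · obtain ⟨α', hα', e⟩ := (hS (k - n)).2 α (by convert hα using 2; omega)
    have h1 := S.Lpow_Ec (k - n) (m := k) (by omega)
      (S.span_low hS (n + 1) ((n : ℤ) - (k - n : ℕ)) (by omega) (by push_cast; omega) α' hα')
    have h2 : (S.L ^ (k - n)) α' - α ∈ S.Ec k :=
      Submodule.mem_sup_left (by convert e using 2; omega)
    have := sub_mem h1 h2
    simpa using this

lemma indep_forms (hS : S.HardLefschetz) (k : ℕ) (β : ℕ → S.M) (s : Finset ℕ)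
    (hβ : ∀ r ∈ s, β r ∈ S.Ω ((k : ℤ) - 2 * r)) (hΛ : ∀ r ∈ s, S.Λ (β r) = 0)
    (hd : ∀ r ∈ s, S.d ((S.L ^ r) (β r)) = 0) (hsum : ∑ r ∈ s, (S.L ^ r) (β r) ∈ S.Bc k) :
    ∀ r ∈ s, (S.L ^ r) (β r) ∈ S.Bc k := by
  induction s using Finset.induction_on_max with
  | empty => simp
  | insert R s hmax ih =>
    have hR : R ∉ s := fun h => lt_irrefl _ (hmax R h)
    rw [Finset.sum_insert hR] at hsum
    have hRs := Finset.mem_insert_self R s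
    have main : (S.L ^ R) (β R) ∈ S.Bc k := by
      rcases lt_or_ge (n + R) k with hlt | hge
      · rw [S.prim_pow (hβ R hRs) (hΛ R hRs) R (by omega)]
        exact zero_mem _
      · obtain ⟨t, ht⟩ : ∃ t : ℕ, n + R = k + t := ⟨n + R - k, by omega⟩
        have h1 := S.Lpow_Bc t rfl hsum
        rw [map_add, map_sum, Finset.sum_eq_zero, add_zero, Lpow_add] at h1
        · rcases Nat.eq_zero_or_pos t with h0 | hpos
          · subst h0; simpa using h1
          · have hclosed : S.d (β R) = 0 := by
              refine S.Lpow_inj R ?_ (S.d_mem _ _ (hβ R hRs)) ?_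
              · omega
              · rw [← d_Lpow]; exact hd R hRs
            have h2 := (hS (t + R)).1 (β R)
              (S.mem_Zc.2 ⟨by convert hβ R hRs using 2; push_cast; omega, hclosed⟩)
              (by convert h1 using 2; push_cast; omega)
            exact S.Lpow_Bc R (by push_cast; omega) h2
        · intro r hr
          have := hmax r hr
          rw [Lpow_add]
          exact S.prim_pow (hβ r (Finset.mem_insert_of_mem hr))
            (hΛ r (Finset.mem_insert_of_mem hr)) _ (by push_cast; omega)
    intro r hr
    rcases Finset.mem_insert.1 hr with rfl | hr
    · exact main
    · refine ih (fun r hr => hβ r (Finset.mem_insert_of_mem hr))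
        (fun r hr => hΛ r (Finset.mem_insert_of_mem hr))
        (fun r hr => hd r (Finset.mem_insert_of_mem hr)) ?_ r hr
      simpa using sub_mem hsum main

end ClosedSymplecticManifold

/-- **Corollary.** Let `(X, ω)` be a `2n`-dimensional closed symplectic manifold satisfying
the Hard Lefschetz Condition. Then the de Rham cohomology decomposes as a direct sum
`H^k_dR(X;ℝ) = ⊕_{r ∈ ℕ} H^{(r, k-2r)}_ω(X;ℝ)` for every degree `k`. -/
theorem hlc_cohomology_decomposition {n : ℕ} (S : ClosedSymplecticManifold n)
    (hS : S.HardLefschetz) (k : ℕ) :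
    DirectSum.IsInternal (fun r : ℕ => S.Hsub (k : ℤ) r) := by
  classical
  rw [DirectSum.isInternal_submodule_iff_iSupIndep_and_iSup_eq_top]
  constructor
  · rw [iSupIndep_iff_finsetSum_eq_zero_imp_eq_zero]
    intro s v hv hsum
    have hrep : ∀ r : ℕ, ∃ β : S.M, r ∈ s → (β ∈ S.Ω ((k : ℤ) - 2 * r) ∧ S.Λ β = 0 ∧
        ∃ h : (S.L ^ r) β ∈ S.Zc k, S.cls k ⟨_, h⟩ = v r) := by
      intro r
      by_cases hr : r ∈ s
      · obtain ⟨a, ⟨β, hβ, e⟩, e2⟩ := hv r hr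
        have e' : (S.L ^ r) β = (a : S.M) := e
        refine ⟨β, fun _ => ⟨hβ.1, hβ.2, by rw [e']; exact a.2, ?_⟩⟩
        rw [← e2]
        congr 1
        exact Subtype.ext e'
      · exact ⟨0, fun h => absurd h hr⟩
    choose β hβ using hrep
    have h := S.indep_forms hS k β s (fun r hr => (hβ r hr).1) (fun r hr => (hβ r hr).2.1)
      (fun r hr => (S.mem_Zc.1 (hβ r hr).2.2.1).2) ?_
    · intro r hr
      obtain ⟨_, _, hz, e⟩ := hβ r hr
      rw [← e]
      exact (Submodule.Quotient.mk_eq_zero _).2 (h r hr)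
    · have hz : ∀ r : ℕ, ∃ a : S.Zc k, r ∈ s → ((a : S.M) = (S.L ^ r) (β r) ∧ S.cls k a = v r) := by
        intro r
        by_cases hr : r ∈ s
        · obtain ⟨_, _, hz, e⟩ := hβ r hr
          exact ⟨⟨_, hz⟩, fun _ => ⟨rfl, e⟩⟩
        · exact ⟨0, fun h => absurd h hr⟩
      choose a ha using hz
      have h0 : ((S.Bc k).comap (S.Zc k).subtype).mkQ (∑ r ∈ s, a r) = 0 := by
        rw [map_sum, ← hsum]
        exact Finset.sum_congr rfl fun r hr => (ha r hr).2
      have h1 := (Submodule.Quotient.mk_eq_zero _).1 h0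
      rw [Submodule.mem_comap, map_sum] at h1
      convert h1 using 1
      exact Finset.sum_congr rfl fun r hr => (ha r hr).1.symm
  · rw [eq_top_iff]
    rintro x -
    obtain ⟨⟨α, hα⟩, rfl⟩ := Submodule.Quotient.mk_surjective _ x
    have key : S.Ec k ≤ ((⨆ r : ℕ, S.Hsub (k : ℤ) r).comap
        ((S.Bc k).comap (S.Zc k).subtype).mkQ).map (S.Zc k).subtype := by
      refine sup_le ?_ (iSup_le fun r => ?_)
      · intro y hy
        refine ⟨⟨y, S.Bc_le_Zc _ hy⟩, ?_, rfl⟩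
        have : ((S.Bc k).comap (S.Zc k).subtype).mkQ ⟨y, S.Bc_le_Zc _ hy⟩ = 0 :=
          (Submodule.Quotient.mk_eq_zero _).2 hy
        change _ ∈ (⨆ r : ℕ, S.Hsub (k : ℤ) r)
        rw [this]
        exact zero_mem _
      · rintro y ⟨hy, hz⟩
        exact ⟨⟨y, hz⟩, Submodule.mem_iSup_of_mem r ⟨⟨y, hz⟩, hy, rfl⟩, rfl⟩
    obtain ⟨⟨y, hy⟩, hy', e⟩ := key (S.span_all hS k α hα)
    have e' : y = α := e
    subst e'
    exact hy'

end
end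

section
/- Let (X, ω) be a 2n-dimensional closed symplectic manifold. Then for every k ∈ {1, …, ⌊n/2⌋} one has H^{(k,0)}_ω(X;ℝ) ∩ H^{(0,2k)}_ω(X;ℝ) = {0}. -/
open Submodule

noncomputable section

namespace ClosedSymplecticManifold

theorem aux_d_L {n : ℕ} (S : ClosedSymplecticManifold n) (j : ℕ) (a : S.M) :
    S.d ((S.wedge S.ω ^ j) a) = (S.wedge S.ω ^ j) (S.d a) := by
  induction j generalizing a with
  | zero => simp
  | succ j ih =>
    rw [pow_succ, Module.End.mul_apply, Module.End.mul_apply, ih,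
      S.leibniz 2 _ S.ω_mem, S.dω]
    norm_num

theorem aux_wedge_L {n : ℕ} (S : ClosedSymplecticManifold n) (j : ℕ) (f : S.M)
    (hf : f ∈ S.Ω 0) (a : S.M) :
    S.wedge f ((S.wedge S.ω ^ j) a) = (S.wedge S.ω ^ j) (S.wedge f a) := by
  induction j generalizing a with
  | zero => simp
  | succ j ih =>
    rw [pow_succ, Module.End.mul_apply, Module.End.mul_apply, ih,
      ← S.wedge_assoc, ← S.wedge_assoc, S.wedge_comm 0 2 f hf S.ω S.ω_mem]
    norm_num

theorem aux_wedge_one {n : ℕ} (S : ClosedSymplecticManifold n) (f : S.M)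
    (hf : f ∈ S.Ω 0) : S.wedge f S.one = f := by
  rw [S.wedge_comm 0 0 f hf S.one S.one_mem, S.one_wedge]
  norm_num

theorem aux_main {n : ℕ} (S : ClosedSymplecticManifold n) (k : ℕ)
    (hk1 : 1 ≤ k) (hk2 : k ≤ n / 2) (f β γ : S.M) (hf : f ∈ S.Ω 0)
    (hcl : S.d ((S.wedge S.ω ^ k) f) = 0)
    (hβ : β ∈ S.Ω ((2 * k : ℕ) : ℤ)) (hprim : S.Λ β = 0)
    (h : (S.wedge S.ω ^ k) f = β + S.d γ) : f = 0 := by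
  have hdf : S.d f = 0 := by
    have h1 := S.d_mem 0 f hf
    refine S.lefschetz_inj (n - 1) (by omega) _ ?_ ?_
    · have : (n : ℤ) - ((n - 1 : ℕ) : ℤ) = 0 + 1 := by omega
      rw [this]; exact h1
    · rw [aux_d_L] at hcl
      have : n - 1 = (n - 1 - k) + k := by omega
      rw [this, pow_add, Module.End.mul_apply, hcl, map_zero]
  have hβ0 : (S.wedge S.ω ^ (n - k)) β = 0 := by
    have h2 := (S.primitive_iff (2 * k) (by omega) β hβ).1 hprim
    have : n - k = (k - 1) + (n - 2 * k + 1) := by omega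
    rw [this, pow_add, Module.End.mul_apply, h2, map_zero]
  have hn : (S.wedge S.ω ^ n) f = S.d ((S.wedge S.ω ^ (n - k)) γ) := by
    have hkn : k ≤ n := by omega
    rw [← pow_sub_mul_pow (S.wedge S.ω) hkn, Module.End.mul_apply, h, map_add, hβ0, zero_add, aux_d_L]
  by_contra hne
  have hp := S.volume_pos f hf hne
  rw [aux_wedge_L S n f hf, aux_wedge_one S f hf, hn] at hp
  have hl := S.leibniz 0 f hf ((S.wedge S.ω ^ (n - k)) γ)
  rw [hdf] at hl
  simp only [map_zero, LinearMap.zero_apply, zero_add, zpow_zero, one_smul] at hl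
  rw [← hl, S.stokes] at hp
  exact lt_irrefl _ hp

end ClosedSymplecticManifold

/-- **Remark.** Let `X` be a `2n`-dimensional closed manifold endowed with a symplectic
structure `ω`. Then, for every `k ∈ {1, …, ⌊n/2⌋}`, it holds
`H^{(k,0)}_ω(X;ℝ) ∩ H^{(0,2k)}_ω(X;ℝ) = {0}` (as subgroups of `H^{2k}_dR(X;ℝ)`). -/
theorem inter_trivial {n : ℕ} (S : ClosedSymplecticManifold n) (k : ℕ)
    (hk1 : 1 ≤ k) (hk2 : k ≤ n / 2) :
    S.Hsub (2 * k) k ⊓ S.Hsub (2 * k) 0 = ⊥ := by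
  rw [eq_bot_iff]
  rintro x ⟨⟨a, ⟨f, ⟨hf, -⟩, hfa⟩, rfl⟩, ⟨b, ⟨β, ⟨hβ, hprim⟩, hβb⟩, hab⟩⟩
  have h1 : b - a ∈ (S.Bc (2 * k)).comap (S.Zc (2 * k)).subtype :=
    (Submodule.Quotient.eq _).1 hab
  obtain ⟨γ, -, hγ⟩ := h1
  have hf0 : f ∈ S.Ω 0 := by
    have : (2 * (k : ℤ) - 2 * (k : ℤ)) = 0 := by omega
    rw [← this]; exact hf
  have hβ' : β ∈ S.Ω ((2 * k : ℕ) : ℤ) := by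
    have : (2 * (k : ℤ) - 2 * ((0 : ℕ) : ℤ)) = ((2 * k : ℕ) : ℤ) := by push_cast; ring
    rw [← this]; exact hβ
  have hfa' : (S.wedge S.ω ^ k) f = (a : S.M) := hfa
  have hβb' : β = (b : S.M) := hβb
  have hγ' : S.d γ = (b : S.M) - (a : S.M) := hγ
  have hz : f = 0 := by
    refine ClosedSymplecticManifold.aux_main S k hk1 hk2 f β (-γ) hf0 ?_ hβ' hprim ?_
    · rw [hfa']; exact a.2.2
    · rw [hfa', map_neg, hγ', hβb']; abel
  have ha : a = 0 := by
    apply Subtype.ext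
    rw [← hfa', hz, map_zero]; rfl
  rw [ha, map_zero]
  exact Submodule.zero_mem _

end
end

section
/- Let (X, ω) be a 2n-dimensional closed symplectic manifold. Then for every r,s ∈ ℕ with 2r+s ≤ n, one has H^{(r,s)}_ω(X;ℝ) = L^r H^{(0,s)}_ω(X;ℝ); more precisely, H^{(r,s)}_ω(X;ℝ) = { [ω^r] ⌣ [β] : β a d-closed primitive s-form }, where ⌣ denotes the cup product on de Rham cohomology. -/
open Submodule

noncomputable section

namespace ClosedSymplecticManifold

variable {n : ℕ} (S : ClosedSymplecticManifold n)

/-- `L^r H^{(0, k-2r)}_ω(X;ℝ) ⊆ H^k_dR(X;ℝ)`: the image of `H^{(0, k-2r)}_ω(X;ℝ)` under cup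
product with `[ω]^r`, i.e. the classes `[ω^r] ⌣ [β] = [L^r β]` with `β` a `d`-closed primitive
`(k-2r)`-form. -/
def LrH0 (k : ℤ) (r : ℕ) : Submodule ℝ (S.Hc k) :=
  ((((S.Ω (k - 2 * r) ⊓ LinearMap.ker S.Λ ⊓ LinearMap.ker S.d).map (S.L ^ r)).comap
      (S.Zc k).subtype)).map ((S.Bc k).comap (S.Zc k).subtype).mkQ

end ClosedSymplecticManifold

theorem ClosedSymplecticManifold.d_L_pow {n : ℕ} (S : ClosedSymplecticManifold n) (r : ℕ)
    (β : S.M) : S.d ((S.L ^ r) β) = (S.L ^ r) (S.d β) := by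
  induction r with
  | zero => simp
  | succ r ih =>
    rw [pow_succ', Module.End.mul_apply, Module.End.mul_apply, ← ih]
    have h2 := S.leibniz 2 S.ω S.ω_mem ((S.L ^ r) β)
    rw [S.dω] at h2
    have h3 : ((-1 : ℝ) ^ (2 : ℤ)) = 1 := by norm_num
    rw [h3, map_zero, LinearMap.zero_apply, zero_add, one_smul] at h2
    exact h2

theorem ClosedSymplecticManifold.d_eq_zero_of_L_pow {n : ℕ} (S : ClosedSymplecticManifold n)
    (r s : ℕ) (h : 2 * r + s ≤ n) (β : S.M) (hβ : β ∈ S.Ω (s : ℤ))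
    (hd : S.d ((S.L ^ r) β) = 0) : S.d β = 0 := by
  rw [S.d_L_pow] at hd
  rcases Nat.eq_zero_or_pos r with rfl | hr
  · simpa using hd
  · refine S.lefschetz_inj (n - s - 1) (by omega) _ ?_ ?_
    · have h1 := S.d_mem _ _ hβ
      have h2 : (n : ℤ) - ((n - s - 1 : ℕ) : ℤ) = s + 1 := by omega
      rw [h2]
      exact h1
    · change (S.L ^ (n - s - 1)) (S.d β) = 0
      have h3 : n - s - 1 = (n - s - 1 - r) + r := by omega
      rw [h3, pow_add, Module.End.mul_apply, hd, map_zero]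

/-- **Proposition.** Let `X` be a `2n`-dimensional closed manifold endowed with a symplectic
structure `ω`. Then, for every `r, s ∈ ℕ` such that `2r + s ≤ n`, one has
`H^{(r,s)}_ω(X;ℝ) = L^r H^{(0,s)}_ω(X;ℝ)`; more precisely, `H^{(r,s)}_ω(X;ℝ)` consists of
the classes `[ω^r] ⌣ [β]` with `β` a `d`-closed primitive `s`-form. -/
theorem Hsub_eq_LrH0 {n : ℕ} (S : ClosedSymplecticManifold n) (r s : ℕ)
    (h : 2 * r + s ≤ n) :
    S.Hsub (2 * r + s) r = S.LrH0 (2 * r + s) r := by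
  have hk : (2 * (r : ℤ) + s) - 2 * r = s := by ring
  apply le_antisymm
  · refine Submodule.map_mono ?_
    rintro ⟨x, hx⟩ ⟨β, ⟨hβ, hΛ⟩, hL⟩
    have hL' : (S.L ^ r) β = x := hL
    refine ⟨β, ⟨⟨hβ, hΛ⟩, ?_⟩, hL⟩
    refine S.d_eq_zero_of_L_pow r s h β ?_ ?_
    · have hβ' : β ∈ S.Ω ((2 * (r : ℤ) + s) - 2 * r) := hβ
      rwa [hk] at hβ'
    · rw [hL']
      exact hx.2
  · exact Submodule.map_mono (Submodule.comap_mono (Submodule.map_mono inf_le_left))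

end
end
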